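/- arXiv:2309.13180 — 2 statements merged into one kernel-verified Lean document; each statement's English description precedes it below -/
import Mathlib

section
/- Let G be a finite simple graph with no isolated vertices and let Γ_fec be the set of fractional edge covers of G. If γ is an extreme point of Γ_fec, then every connected component of the subgraph H with edge set supp(γ) that contains a pendant edge of H (an edge incident to a vertex of H-degree 1) is a substar, i.e., all edges of that component are incident to one common vertex. -/
open Finset

noncomputable section
open scoped Classical

variable {V : Type*}

/-- The set of admissible densities for a family `Γ` of objects on the edge set of `G`.
Densities are elements of `ℝ^E_{≥0}`, modeled as nonnegative functions on `Sym2 V`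
vanishing outside the edge set of `G`. `ρ` is admissible if `ℓ_ρ(γ) ≥ 1` for all `γ ∈ Γ`. -/
def Adm [Fintype V] [DecidableEq V] (G : SimpleGraph V) (Γ : Set (Sym2 V → ℝ)) :
    Set (Sym2 V → ℝ) :=
  {ρ | (∀ e, 0 ≤ ρ e) ∧ (∀ e ∉ G.edgeSet, ρ e = 0) ∧
    ∀ γ ∈ Γ, 1 ≤ ∑ e ∈ G.edgeFinset, γ e * ρ e}

/-- The `p`-energy of a density `ρ` with edge weights `σ`: `Σ_e σ(e) ρ(e)^p`. -/
def energy [Fintype V] [DecidableEq V] (p : ℝ) (σ : Sym2 V → ℝ) (G : SimpleGraph V)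
    (ρ : Sym2 V → ℝ) : ℝ :=
  ∑ e ∈ G.edgeFinset, σ e * ρ e ^ p

/-- The `p`-modulus of a family `Γ` with edge weights `σ`:
the infimum of the `p`-energy over admissible densities. -/
def Modulus [Fintype V] [DecidableEq V] (p : ℝ) (σ : Sym2 V → ℝ) (G : SimpleGraph V)
    (Γ : Set (Sym2 V → ℝ)) : ℝ :=
  sInf (energy p σ G '' Adm G Γ)

/-- The unweighted 2-energy `Σ_e ρ(e)²`. -/
def energy2 [Fintype V] [DecidableEq V] (G : SimpleGraph V) (ρ : Sym2 V → ℝ) : ℝ :=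
  ∑ e ∈ G.edgeFinset, ρ e ^ 2

/-- The unweighted 2-modulus. -/
def Mod2 [Fintype V] [DecidableEq V] (G : SimpleGraph V) (Γ : Set (Sym2 V → ℝ)) : ℝ :=
  sInf (energy2 G '' Adm G Γ)

/-- `C` is an edge cover of `G`: a set of edges of `G` meeting every vertex. -/
def IsEdgeCover [Fintype V] [DecidableEq V] (G : SimpleGraph V) (C : Finset (Sym2 V)) : Prop :=
  ↑C ⊆ G.edgeSet ∧ ∀ v : V, ∃ e ∈ C, v ∈ e

/-- The family `Γ_ec` of indicator vectors of edge covers of `G`. -/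
def Γec [Fintype V] [DecidableEq V] (G : SimpleGraph V) : Set (Sym2 V → ℝ) :=
  {γ | ∃ C : Finset (Sym2 V), IsEdgeCover G C ∧ γ = fun e => if e ∈ C then 1 else 0}

/-- The family `Γ_fec` of fractional edge covers of `G`: nonnegative vectors on the edge
set with `Σ_{e ∈ δ(v)} γ(e) ≥ 1` at every vertex `v`. -/
def Γfec [Fintype V] [DecidableEq V] (G : SimpleGraph V) : Set (Sym2 V → ℝ) :=
  {γ | (∀ e, 0 ≤ γ e) ∧ (∀ e ∉ G.edgeSet, γ e = 0) ∧
    ∀ v : V, 1 ≤ ∑ e ∈ G.incidenceFinset v, γ e}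

/-- The family `Γ_star` of indicator vectors of the stars `δ(v)`, `v ∈ V`. -/
def Γstar [Fintype V] [DecidableEq V] (G : SimpleGraph V) : Set (Sym2 V → ℝ) :=
  {γ | ∃ v : V, γ = fun e => if e ∈ G.incidenceFinset v then 1 else 0}

/-- The subgraph of `G` whose edge set is the support `{e : γ(e) > 0}` of `γ`. -/
def suppGraph (G : SimpleGraph V) (γ : Sym2 V → ℝ) : SimpleGraph V where
  Adj u v := G.Adj u v ∧ 0 < γ s(u, v)
  symm := by
    constructor
    intro u v h
    refine ⟨h.1.symm, ?_⟩
    rw [Sym2.eq_swap]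
    exact h.2
  loopless := ⟨fun v h => G.loopless.irrefl v h.1⟩

/-!
An extreme point of `Γ_fec` admits no nonzero perturbation that is supported on its support and has
vanishing sum at every tight vertex. A dimension count then bounds the number of edges of each
subgraph of the support by the number of tight vertices it touches. By the handshake lemma, if no
tight vertex has degree `1` in such a subgraph, then it touches tight vertices only.

Delete all pendant edges from the support. An edge at a leaf has weight at least `1`, so a tight
neighbour of a leaf is itself a leaf; hence no tight vertex has degree `1` in what remains. Now let
`v` be the neighbour of a leaf. If the edge from `v` to some other neighbour survived the deletion,
then `v` would be tight, hence a leaf, and no edge at `v` would survive. So all neighbours of `v`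
are leaves, and its component is a star.
-/

open Filter Topology

lemma eq_zero_of_add_mem_of_sub_mem_of_mem_extremePoints {𝕜 E : Type*} [Field 𝕜] [LinearOrder 𝕜]
    [IsStrictOrderedRing 𝕜] [AddCommGroup E] [Module 𝕜 E] {A : Set E} {x d : E}
    (hx : x ∈ A.extremePoints 𝕜) (hadd : x + d ∈ A) (hsub : x - d ∈ A) : d = 0 := by
  have hmid : x ∈ openSegment 𝕜 (x + d) (x - d) :=
    ⟨1 / 2, 1 / 2, by norm_num, by norm_num, by norm_num, by module⟩
  simpa using hx.2 hadd hsub hmid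

lemma eventually_nonneg_add_mul {a b : ℝ} (ha : 0 ≤ a) (hb : a = 0 → b = 0) :
    ∀ᶠ ε : ℝ in 𝓝 0, 0 ≤ a + ε * b := by
  rcases ha.eq_or_lt with rfl | ha
  · simp [hb rfl]
  · have hcont : Continuous fun ε : ℝ => a + ε * b := by fun_prop
    exact (hcont.tendsto' 0 a (by simp)).eventually_const_le ha

lemma eq_or_adj_of_reachable {H : SimpleGraph V} {v x : V}
    (hback : ∀ w z, H.Adj v w → H.Adj w z → z = v) (hx : H.Reachable v x) :
    x = v ∨ H.Adj v x := by
  rw [SimpleGraph.reachable_iff_reflTransGen] at hx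
  induction hx with
  | refl => exact Or.inl rfl
  | tail _ hadj ih =>
    rcases ih with rfl | hv
    · exact Or.inr hadj
    · exact Or.inl (hback _ _ hv hadj)

lemma ne_zero_of_mem_edgeSet_suppGraph {G : SimpleGraph V} {γ : Sym2 V → ℝ} {e : Sym2 V}
    (he : e ∈ (suppGraph G γ).edgeSet) : γ e ≠ 0 := by
  induction e with
  | h x y => exact he.2.ne'

lemma eq_of_degree_eq_one {H : SimpleGraph V} {x y z : V} [Fintype (H.neighborSet x)]
    (hx : H.degree x = 1) (hy : H.Adj x y) (hz : H.Adj x z) : y = z :=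
  (SimpleGraph.degree_eq_one_iff_existsUnique_adj.1 hx).unique hy hz

section

variable [Fintype V]

/-- The graph obtained from `H` by deleting its pendant edges, i.e. the edges incident to a leaf.
All vertices are kept. -/
def deletePendantEdges (H : SimpleGraph V) : SimpleGraph V :=
  H.deleteEdges {e | ∃ x ∈ e, H.degree x = 1}

lemma deletePendantEdges_le (H : SimpleGraph V) : deletePendantEdges H ≤ H :=
  H.deleteEdges_le _

lemma deletePendantEdges_adj {H : SimpleGraph V} {x y : V} :
    (deletePendantEdges H).Adj x y ↔ H.Adj x y ∧ H.degree x ≠ 1 ∧ H.degree y ≠ 1 := by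
  simp [deletePendantEdges]

lemma degree_deletePendantEdges_ne_one {H : SimpleGraph V} {x : V}
    (hnbr : ∀ y, H.Adj x y → H.degree y = 1 → H.degree x = 1) :
    (deletePendantEdges H).degree x ≠ 1 := by
  intro hdeg
  obtain ⟨y, hxy, -⟩ := SimpleGraph.degree_eq_one_iff_existsUnique_adj.1 hdeg
  have hx : H.degree x ≠ 1 := (deletePendantEdges_adj.1 hxy).2.1
  have hadj (z : V) : (deletePendantEdges H).Adj x z ↔ H.Adj x z :=
    deletePendantEdges_adj.trans ⟨And.left, fun hz => ⟨hz, hx, fun h => hx (hnbr z hz h)⟩⟩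
  simp only [SimpleGraph.degree_eq_one_iff_existsUnique_adj, hadj] at hdeg
  exact hx (SimpleGraph.degree_eq_one_iff_existsUnique_adj.2 hdeg)

variable [DecidableEq V] {G K : SimpleGraph V} {γ d : Sym2 V → ℝ}

/-- A vertex is tight for `γ` if its covering constraint `Σ_{e ∈ δ(x)} γ(e) ≥ 1` is active. -/
def IsTight (G : SimpleGraph V) (γ : Sym2 V → ℝ) (x : V) : Prop :=
  ∑ e ∈ G.incidenceFinset x, γ e = 1

lemma eventually_add_smul_mem_Γfec (hγ : γ ∈ Γfec G) (hsupp : ∀ e, γ e = 0 → d e = 0)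
    (htight : ∀ x, IsTight G γ x → ∑ e ∈ G.incidenceFinset x, d e = 0) :
    ∀ᶠ ε : ℝ in 𝓝 0, γ + ε • d ∈ Γfec G := by
  obtain ⟨hnonneg, hoff, hcover⟩ := hγ
  have hedge : ∀ᶠ ε : ℝ in 𝓝 0, ∀ e, 0 ≤ γ e + ε * d e :=
    eventually_all.2 fun e => eventually_nonneg_add_mul (hnonneg e) (hsupp e)
  have hvertex : ∀ᶠ ε : ℝ in 𝓝 0, ∀ x, 0 ≤ (∑ e ∈ G.incidenceFinset x, γ e - 1) +
      ε * ∑ e ∈ G.incidenceFinset x, d e :=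
    eventually_all.2 fun x => eventually_nonneg_add_mul (sub_nonneg.2 (hcover x))
      fun h => htight x (sub_eq_zero.1 h)
  filter_upwards [hedge, hvertex] with ε hε_edge hε_vertex
  refine ⟨hε_edge, fun e he => by simp [hoff e he, hsupp e (hoff e he)], fun x => ?_⟩
  simp only [Pi.add_apply, Pi.smul_apply, smul_eq_mul, sum_add_distrib, ← mul_sum]
  linarith [hε_vertex x]

lemma eq_zero_of_mem_extremePoints_Γfec (hγ : γ ∈ (Γfec G).extremePoints ℝ)
    (hsupp : ∀ e, γ e = 0 → d e = 0)
    (htight : ∀ x, IsTight G γ x → ∑ e ∈ G.incidenceFinset x, d e = 0) : d = 0 := by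
  have hadd := eventually_add_smul_mem_Γfec hγ.1 hsupp htight
  have hsub : ∀ᶠ ε : ℝ in 𝓝 0, γ + (-ε) • d ∈ Γfec G :=
    (continuous_neg.tendsto' 0 0 neg_zero).eventually hadd
  obtain ⟨ε, ⟨hε_add, hε_sub⟩, hε⟩ :=
    (((hadd.and hsub).filter_mono nhdsWithin_le_nhds).and
      (self_mem_nhdsWithin : ∀ᶠ ε : ℝ in 𝓝[>] 0, 0 < ε)).exists
  rw [neg_smul, ← sub_eq_add_neg] at hε_sub
  exact (smul_eq_zero.1 <|
    eq_zero_of_add_mem_of_sub_mem_of_mem_extremePoints hγ hε_add hε_sub).resolve_left hε.ne'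

lemma card_edgeFinset_le_card_isTight (hγ : γ ∈ (Γfec G).extremePoints ℝ)
    (hK : K ≤ suppGraph G γ) :
    #K.edgeFinset ≤ #{x | IsTight G γ x ∧ 0 < K.degree x} := by
  set T : Finset V := {x | IsTight G γ x ∧ 0 < K.degree x}
  let extend : (K.edgeSet → ℝ) →ₗ[ℝ] (Sym2 V → ℝ) :=
    Function.ExtendByZero.linearMap ℝ Subtype.val
  let tightSums : (Sym2 V → ℝ) →ₗ[ℝ] (T → ℝ) :=
    LinearMap.pi fun x => ∑ e ∈ G.incidenceFinset x, LinearMap.proj e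
  have extend_off (d : K.edgeSet → ℝ) {e : Sym2 V} (he : e ∉ K.edgeSet) : extend d e = 0 :=
    Function.extend_apply' _ _ _ fun ⟨e', he'⟩ => he (he' ▸ e'.2)
  have hinj : Function.Injective (tightSums ∘ₗ extend) := by
    refine (injective_iff_map_eq_zero _).2 fun d hd => ?_
    have hextend : extend d = 0 := by
      refine eq_zero_of_mem_extremePoints_Γfec hγ
        (fun e he => extend_off d fun heK =>
          ne_zero_of_mem_edgeSet_suppGraph (SimpleGraph.edgeSet_mono hK heK) he)
        fun x hx => ?_
      by_cases hdeg : 0 < K.degree x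
      · have hxT : x ∈ T := by simp [T, hx, hdeg]
        simpa [tightSums] using congrFun hd ⟨x, hxT⟩
      · refine sum_eq_zero fun e he => extend_off d fun heK => hdeg ?_
        rw [← K.card_incidenceFinset_eq_degree, card_pos]
        exact ⟨e, (K.mem_incidenceFinset x e).2
          ⟨heK, ((G.mem_incidenceFinset x e).1 he).2⟩⟩
    exact Function.extend_injective Subtype.val_injective (0 : Sym2 V → ℝ)
      (hextend.trans (map_zero extend).symm)
  simpa only [Module.finrank_fintype_fun_eq_card, ← SimpleGraph.edgeFinset_card,
    Fintype.card_coe] using LinearMap.finrank_le_finrank_of_injective hinj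

lemma isTight_of_degree_pos (hγ : γ ∈ (Γfec G).extremePoints ℝ) (hK : K ≤ suppGraph G γ)
    (hdeg : ∀ x, IsTight G γ x → K.degree x ≠ 1) {v : V} (hv : 0 < K.degree v) :
    IsTight G γ v := by
  by_contra hvt
  set T : Finset V := {x | IsTight G γ x ∧ 0 < K.degree x} with hT
  have hvT : v ∉ T := by simp [hT, hvt]
  have hTdeg (x : V) (hx : x ∈ T) : 2 ≤ K.degree x := by
    obtain ⟨hxt, hpos⟩ : IsTight G γ x ∧ 0 < K.degree x := by simpa [hT] using hx
    have := hdeg x hxt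
    omega
  have : 2 * #T < 2 * #T :=
    calc
      2 * #T = #T • 2 := by rw [smul_eq_mul, mul_comm]
      _ ≤ ∑ x ∈ T, K.degree x := card_nsmul_le_sum T _ 2 hTdeg
      _ < ∑ x, K.degree x := sum_lt_sum_of_subset T.subset_univ (mem_univ v) hvT hv (by simp)
      _ = 2 * #K.edgeFinset := K.sum_degrees_eq_twice_card_edges
      _ ≤ 2 * #T := by gcongr; exact card_edgeFinset_le_card_isTight hγ hK
  exact this.false

lemma one_le_of_degree_suppGraph_eq_one (hγ : γ ∈ Γfec G) {x y : V}
    (hx : (suppGraph G γ).degree x = 1) (hxy : (suppGraph G γ).Adj x y) : 1 ≤ γ s(x, y) := by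
  have hother (e : Sym2 V) (he : e ∈ G.incidenceFinset x) (hne : e ≠ s(x, y)) : γ e = 0 := by
    obtain ⟨heG, hxe⟩ := (G.mem_incidenceFinset x e).1 he
    obtain ⟨z, rfl⟩ := Sym2.mem_iff_exists.1 hxe
    by_contra hz
    exact hne (by rw [eq_of_degree_eq_one hx hxy ⟨heG, (hγ.1 _).lt_of_ne' hz⟩])
  have hmem : s(x, y) ∈ G.incidenceFinset x := by simpa using hxy.1
  exact (hγ.2.2 x).trans_eq (sum_eq_single_of_mem _ hmem hother)

lemma IsTight.degree_suppGraph_eq_one (hγ : γ ∈ Γfec G) {x y : V} (hx : IsTight G γ x)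
    (hxy : (suppGraph G γ).Adj x y) (hy : (suppGraph G γ).degree y = 1) :
    (suppGraph G γ).degree x = 1 := by
  refine SimpleGraph.degree_eq_one_iff_existsUnique_adj.2 ⟨y, hxy, fun z hxz => ?_⟩
  by_contra hzy
  have hle : 1 ≤ γ s(x, y) := Sym2.eq_swap ▸ one_le_of_degree_suppGraph_eq_one hγ hy hxy.symm
  have hlt : γ s(x, y) < ∑ e ∈ G.incidenceFinset x, γ e :=
    single_lt_sum (mt Sym2.congr_right.1 hzy) (by simpa using hxy.1) (by simpa using hxz.1) hxz.2
      fun e _ _ => hγ.1 e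
  exact (hle.trans_lt hlt).ne' hx

lemma degree_suppGraph_eq_one_of_adj_of_adj (hγ : γ ∈ (Γfec G).extremePoints ℝ) {u v w : V}
    (hu : (suppGraph G γ).degree u = 1) (huv : (suppGraph G γ).Adj u v)
    (hvw : (suppGraph G γ).Adj v w) : (suppGraph G γ).degree w = 1 := by
  by_contra hw
  have hv : (suppGraph G γ).degree v ≠ 1 := fun hv =>
    hw (eq_of_degree_eq_one hv huv.symm hvw ▸ hu)
  have hvt : IsTight G γ v := by
    refine isTight_of_degree_pos hγ (deletePendantEdges_le _)
      (fun x hx => degree_deletePendantEdges_ne_one fun y hxy =>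
        hx.degree_suppGraph_eq_one hγ.1 hxy)
      ((SimpleGraph.degree_pos_iff_exists_adj _ v).2 ⟨w, ?_⟩)
    exact deletePendantEdges_adj.2 ⟨hvw, hv, hw⟩
  exact hv (hvt.degree_suppGraph_eq_one hγ.1 huv.symm hu)

end

/-- If `γ` is an extreme point of the set of fractional edge covers, then every connected
component of the support graph `H` containing a pendant edge (an edge `uv` with
`deg_H(u) = 1`) is a substar: all edges of that component meet a common vertex. -/
theorem extremePoint_pendant_component_substar [Fintype V] [DecidableEq V]
    (G : SimpleGraph V) (hiso : ∀ v : V, ∃ u, G.Adj v u) (γ : Sym2 V → ℝ)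
    (hγ : γ ∈ (Γfec G).extremePoints ℝ) :
    ∀ u v : V, (suppGraph G γ).Adj u v → (suppGraph G γ).degree u = 1 →
      ∃ c : V, ∀ x y : V, (suppGraph G γ).Adj x y →
        (suppGraph G γ).Reachable u x → x = c ∨ y = c := by
  intro u v huv hu
  have hback (w z : V) (hvw : (suppGraph G γ).Adj v w) (hwz : (suppGraph G γ).Adj w z) : z = v :=
    eq_of_degree_eq_one (degree_suppGraph_eq_one_of_adj_of_adj hγ hu huv hvw) hwz hvw.symm
  refine ⟨v, fun x y hxy hux => ?_⟩
  rcases eq_or_adj_of_reachable hback (huv.symm.reachable.trans hux) with hx | hvx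
  · exact Or.inl hx
  · exact Or.inr (hback x y hvx hxy)
end
end

section
/- Let G be a finite simple graph with no isolated vertices and positive edge weights σ, let Γ_star be the family of stars of G, let 1 < p < ∞ and let q = p/(p-1). Then Mod_{p,σ}(Γ_star) ≥ (|V|/2)^p · (Σ_{e∈E} σ(e)^{-q/p})^{-p/q}. In particular, if σ ≡ 1 then Mod_p(Γ_star) ≥ (|V| / (2·|E|^{1/q}))^p. -/
open Finset

noncomputable section
open scoped Classical

variable {V : Type*}

/-!
Every edge lies in exactly two stars, so summing the admissibility constraints over all vertices
gives an admissible density total mass at least `|V| / 2`. Hölder's inequality for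
`ρ = (σ ^ (1 / p) ρ) σ ^ (-1 / p)` bounds the total mass of any density by its energy.
-/

section Holder

lemma div_rpow_one_div_rpow {a b : ℝ} (ha : 0 ≤ a) (hb : 0 ≤ b) (p q : ℝ) :
    (a / b ^ (1 / q)) ^ p = a ^ p * b ^ (-(p / q)) := by
  rw [Real.div_rpow ha (Real.rpow_nonneg hb _), ← Real.rpow_mul hb, one_div_mul_eq_div,
    Real.rpow_neg hb, div_eq_mul_inv]

variable {ι : Type*} {s : Finset ι} {w f : ι → ℝ} {p q : ℝ}

lemma sum_le_weighted_Lp_mul_Lq (hpq : p.HolderConjugate q) (hw : ∀ i ∈ s, 0 < w i)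
    (hf : ∀ i ∈ s, 0 ≤ f i) :
    ∑ i ∈ s, f i ≤
      (∑ i ∈ s, w i * f i ^ p) ^ (1 / p) * (∑ i ∈ s, w i ^ (-(q / p))) ^ (1 / q) := by
  have hsplit : ∀ i ∈ s, f i = w i ^ (1 / p) * f i * w i ^ (-(1 / p)) := fun i hi ↦ by
    rw [mul_right_comm, ← Real.rpow_add (hw i hi), add_neg_cancel, Real.rpow_zero, one_mul]
  have hLp : ∀ i ∈ s, (w i ^ (1 / p) * f i) ^ p = w i * f i ^ p := fun i hi ↦ by
    rw [Real.mul_rpow (Real.rpow_nonneg (hw i hi).le _) (hf i hi), ← Real.rpow_mul (hw i hi).le,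
      one_div_mul_cancel hpq.ne_zero, Real.rpow_one]
  have hLq : ∀ i ∈ s, (w i ^ (-(1 / p))) ^ q = w i ^ (-(q / p)) := fun i hi ↦ by
    rw [← Real.rpow_mul (hw i hi).le, neg_mul, one_div_mul_eq_div]
  rw [sum_congr rfl hsplit, ← sum_congr rfl hLp, ← sum_congr rfl hLq]
  exact Real.inner_le_Lp_mul_Lq_of_nonneg s hpq
    (fun i hi ↦ mul_nonneg (Real.rpow_nonneg (hw i hi).le _) (hf i hi))
    (fun i hi ↦ Real.rpow_nonneg (hw i hi).le _)

lemma rpow_sum_mul_rpow_neg_le_sum_mul_rpow (hpq : p.HolderConjugate q)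
    (hw : ∀ i ∈ s, 0 < w i) (hf : ∀ i ∈ s, 0 ≤ f i) :
    (∑ i ∈ s, f i) ^ p * (∑ i ∈ s, w i ^ (-(q / p))) ^ (-(p / q)) ≤
      ∑ i ∈ s, w i * f i ^ p := by
  obtain rfl | hs := s.eq_empty_or_nonempty
  · simp [Real.zero_rpow hpq.ne_zero]
  have hE : 0 ≤ ∑ i ∈ s, w i * f i ^ p :=
    sum_nonneg fun i hi ↦ mul_nonneg (hw i hi).le (Real.rpow_nonneg (hf i hi) _)
  have hS : 0 < ∑ i ∈ s, w i ^ (-(q / p)) :=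
    sum_pos (fun i hi ↦ Real.rpow_pos_of_pos (hw i hi) _) hs
  rw [← div_rpow_one_div_rpow (sum_nonneg hf) hS.le,
    ← Real.le_rpow_inv_iff_of_pos (div_nonneg (sum_nonneg hf) (Real.rpow_nonneg hS.le _)) hE
      hpq.pos,
    div_le_iff₀ (Real.rpow_pos_of_pos hS _), ← one_div]
  exact sum_le_weighted_Lp_mul_Lq hpq hw hf

end Holder

section Modulus

lemma sum_sum_incidenceFinset [Fintype V] [DecidableEq V] {M : Type*} [AddCommMonoid M]
    (G : SimpleGraph V) [G.LocallyFinite] [Fintype G.edgeSet] (f : Sym2 V → M) :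
    ∑ v, ∑ e ∈ G.incidenceFinset v, f e = 2 • ∑ e ∈ G.edgeFinset, f e :=
  calc ∑ v, ∑ e ∈ G.incidenceFinset v, f e
      = ∑ e ∈ G.edgeFinset, ∑ _v ∈ e.toFinset, f e := sum_comm' fun v e ↦ by
        simp only [mem_univ, true_and, G.incidenceFinset_eq_filter, mem_filter, Sym2.mem_toFinset,
          and_comm]
    _ = ∑ e ∈ G.edgeFinset, 2 • f e := sum_congr rfl fun e he ↦ by
        rw [sum_const, e.card_toFinset_of_not_isDiag
          (G.not_isDiag_of_mem_edgeSet (SimpleGraph.mem_edgeFinset.1 he))]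
    _ = 2 • ∑ e ∈ G.edgeFinset, f e := (smul_sum ..).symm

variable [Fintype V] [DecidableEq V]

lemma adm_Γstar_eq_Γfec (G : SimpleGraph V) : Adm G (Γstar G) = Γfec G := by
  have length_star (ρ : Sym2 V → ℝ) (v : V) :
      ∑ e ∈ G.edgeFinset, (if e ∈ G.incidenceFinset v then 1 else 0) * ρ e =
        ∑ e ∈ G.incidenceFinset v, ρ e := by
    simp only [ite_mul, one_mul, zero_mul, sum_ite_mem,
      inter_eq_right.2 (G.incidenceFinset_subset v)]
  ext ρ
  simp only [Adm, Γstar, Γfec, Set.mem_ofPred_eq, forall_exists_index, forall_eq_apply_imp_iff,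
    length_star]

variable {G : SimpleGraph V}

lemma Γfec_nonempty (hG : ∀ v, ∃ u, G.Adj v u) : (Γfec G).Nonempty := by
  refine ⟨G.edgeSet.indicator 1, Set.indicator_nonneg fun _ _ ↦ zero_le_one,
    fun _ he ↦ Set.indicator_of_notMem he 1, fun v ↦ ?_⟩
  have hdeg : ∑ e ∈ G.incidenceFinset v, G.edgeSet.indicator (1 : Sym2 V → ℝ) e = G.degree v := by
    rw [← G.card_incidenceFinset_eq_degree, ← nsmul_one]
    exact sum_eq_card_nsmul fun e he ↦
      Set.indicator_of_mem (SimpleGraph.mem_edgeFinset.1 (G.incidenceFinset_subset v he)) 1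
  rw [hdeg, Nat.one_le_cast]
  exact (G.degree_pos_iff_exists_adj v).2 (hG v)

lemma card_div_two_le_sum_of_mem_Γfec {γ : Sym2 V → ℝ} (hγ : γ ∈ Γfec G) :
    (Fintype.card V : ℝ) / 2 ≤ ∑ e ∈ G.edgeFinset, γ e := by
  rw [div_le_iff₀' two_pos]
  calc (Fintype.card V : ℝ)
      = ∑ _v : V, 1 := by rw [sum_const, nsmul_one, card_univ]
    _ ≤ ∑ v, ∑ e ∈ G.incidenceFinset v, γ e := sum_le_sum fun v _ ↦ hγ.2.2 v
    _ = 2 * ∑ e ∈ G.edgeFinset, γ e := by rw [sum_sum_incidenceFinset, nsmul_eq_mul, Nat.cast_ofNat]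

lemma le_modulus_of_forall_le_sum {Γ : Set (Sym2 V → ℝ)} {σ : Sym2 V → ℝ} {p q c : ℝ}
    (hpq : p.HolderConjugate q) (hσ : ∀ e ∈ G.edgeFinset, 0 < σ e) (hΓ : (Adm G Γ).Nonempty)
    (hc : 0 ≤ c) (hmass : ∀ ρ ∈ Adm G Γ, c ≤ ∑ e ∈ G.edgeFinset, ρ e) :
    c ^ p * (∑ e ∈ G.edgeFinset, σ e ^ (-(q / p))) ^ (-(p / q)) ≤ Modulus p σ G Γ := by
  refine le_csInf (hΓ.image _) ?_
  rintro _ ⟨ρ, hρ, rfl⟩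
  have hS : 0 ≤ ∑ e ∈ G.edgeFinset, σ e ^ (-(q / p)) :=
    sum_nonneg fun e he ↦ Real.rpow_nonneg (hσ e he).le _
  calc c ^ p * (∑ e ∈ G.edgeFinset, σ e ^ (-(q / p))) ^ (-(p / q))
      ≤ (∑ e ∈ G.edgeFinset, ρ e) ^ p * (∑ e ∈ G.edgeFinset, σ e ^ (-(q / p))) ^ (-(p / q)) := by
        gcongr
        · exact hpq.nonneg
        · exact hmass ρ hρ
    _ ≤ energy p σ G ρ := rpow_sum_mul_rpow_neg_le_sum_mul_rpow hpq hσ fun e _ ↦ hρ.1 e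

end Modulus

/-- `Mod_{p,σ}(Γ_star) ≥ (|V|/2)^p (Σ_e σ(e)^{-q/p})^{-p/q}`; in particular, if `σ ≡ 1`,
then `Mod_p(Γ_star) ≥ (|V| / (2 |E|^{1/q}))^p`. -/
theorem mod_star_lower_bound [Fintype V] [DecidableEq V] (G : SimpleGraph V)
    (hiso : ∀ v : V, ∃ u, G.Adj v u) (σ : Sym2 V → ℝ) (hσ : ∀ e, 0 < σ e)
    (p q : ℝ) (hp : 1 < p) (hq : q = p / (p - 1)) :
    ((Fintype.card V : ℝ) / 2) ^ p *
        (∑ e ∈ G.edgeFinset, σ e ^ (-(q / p))) ^ (-(p / q))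
      ≤ Modulus p σ G (Γstar G) ∧
    ((∀ e, σ e = 1) →
      ((Fintype.card V : ℝ) / (2 * (G.edgeFinset.card : ℝ) ^ (1 / q))) ^ p
        ≤ Modulus p σ G (Γstar G)) := by
  have hpq : p.HolderConjugate q := (Real.holderConjugate_iff_eq_conjExponent hp).2 hq
  have weighted : ((Fintype.card V : ℝ) / 2) ^ p *
      (∑ e ∈ G.edgeFinset, σ e ^ (-(q / p))) ^ (-(p / q)) ≤ Modulus p σ G (Γstar G) := by
    refine le_modulus_of_forall_le_sum hpq (fun e _ ↦ hσ e) ?_ (by positivity) ?_ <;>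
      rw [adm_Γstar_eq_Γfec]
    · exact Γfec_nonempty hiso
    · exact fun _ ↦ card_div_two_le_sum_of_mem_Γfec
  refine ⟨weighted, fun hσ_one ↦ ?_⟩
  rw [← div_div, div_rpow_one_div_rpow (by positivity) (Nat.cast_nonneg _)]
  simpa only [hσ_one, Real.one_rpow, sum_const, nsmul_one] using weighted
end
end
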